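/- Fix δ > 0. There exists a constant C > 0 depending only on δ such that the following holds. Let m, ℓ be integers with ℓ = m+1, let p satisfy pm ∈ [1+δ, δ^{−1}] and let τ satisfy τm ∈ [√(log m)/2, 2√(log m)]. Let M be an m×ℓ random matrix with independent {0,1}-entries such that M_{ij} ∼ Ber(p) for j ∈ [m] and M_{iℓ} ∼ Ber(τ). Then for every integer k with 0 ≤ k ≤ (log m)^{1/3}, the expected number of subsets S ⊆ [ℓ] of size k+1 with ℓ ∈ S and |U(S)| = 0 is at most C·exp(−(log m)^{1/2}/16). -/

import Mathlib

open MeasureTheory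

/-- The Bernoulli measure on `ℝ`, putting mass `p` at `1` and mass `1 - p` at `0`. -/
noncomputable def bernoulliR (p : ℝ) : Measure ℝ :=
  ENNReal.ofReal p • Measure.dirac 1 + ENNReal.ofReal (1 - p) • Measure.dirac 0

/-- The law of an `m × (m+1)` matrix with independent entries: `Ber(p)` in the first `m`
columns and `Ber(τ)` in the last column. -/
noncomputable def lawLastColumn (m : ℕ) (p τ : ℝ) : Measure (Fin m → Fin (m + 1) → ℝ) :=
  Measure.pi fun _ => Measure.pi fun j =>
    if (j : ℕ) < m then bernoulliR p else bernoulliR τ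

/-- The set of unique neighbours `U(S)` of a set `S` of columns of an `m × l` matrix. -/
def uniqueNbrSet {m l : ℕ} (M : Matrix (Fin m) (Fin l) ℝ) (S : Finset (Fin l)) :
    Set (Fin m) :=
  {i | ((∃ j ∈ S, (j : ℕ) = (i : ℕ)) ∧ ∀ j ∈ S, M i j = 0) ∨
       ((¬ ∃ j ∈ S, (j : ℕ) = (i : ℕ)) ∧ {j : Fin l | j ∈ S ∧ M i j = 1}.ncard = 1)}

lemma bern_univ (p : ℝ) : bernoulliR p Set.univ = ENNReal.ofReal p + ENNReal.ofReal (1 - p) := by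
  simp [bernoulliR]

lemma bern_finite (p : ℝ) : IsFiniteMeasure (bernoulliR p) :=
  ⟨by rw [bern_univ]; exact ENNReal.add_lt_top.2 ⟨ENNReal.ofReal_lt_top, ENNReal.ofReal_lt_top⟩⟩

lemma bern_prob {p : ℝ} (h0 : 0 ≤ p) (h1 : p ≤ 1) : IsProbabilityMeasure (bernoulliR p) :=
  ⟨by rw [bern_univ, ← ENNReal.ofReal_add h0 (by linarith)]; simp⟩

lemma bern_one (p : ℝ) : bernoulliR p {1} = ENNReal.ofReal p := by
  simp [bernoulliR]

lemma bern_zero (p : ℝ) : bernoulliR p {0} = ENNReal.ofReal (1 - p) := by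
  simp [bernoulliR]

lemma bern_ne_zero (p : ℝ) : bernoulliR p {0}ᶜ = ENNReal.ofReal p := by
  simp [bernoulliR]

/-- The law of one row. -/
noncomputable def rowLaw {n : ℕ} (w : Fin n → ℝ) : Measure (Fin n → ℝ) :=
  Measure.pi fun j => bernoulliR (w j)

lemma rowLaw_prob {n : ℕ} (w : Fin n → ℝ) (h0 : ∀ j, 0 ≤ w j) (h1 : ∀ j, w j ≤ 1) :
    IsProbabilityMeasure (rowLaw w) := by
  have : ∀ j, IsProbabilityMeasure (bernoulliR (w j)) := fun j => bern_prob (h0 j) (h1 j)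
  unfold rowLaw
  infer_instance

lemma row_meas {n : ℕ} (P : (Fin n → Prop × Prop) → Prop) :
    MeasurableSet {r : Fin n → ℝ | P fun j => (r j = 0, r j = 1)} := by
  have hg : Measurable fun r : Fin n → ℝ => fun j => ((r j = 0, r j = 1) : Prop × Prop) := by
    refine measurable_pi_lambda _ fun j => ?_
    refine Measurable.prodMk ?_ ?_
    · refine measurableSet_setOfPred.1 ?_
      have h : MeasurableSet ((fun r : Fin n → ℝ => r j) ⁻¹' {0}) :=
        (measurable_pi_apply j) (measurableSet_singleton (0:ℝ))
      exact h
    · refine measurableSet_setOfPred.1 ?_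
      have h : MeasurableSet ((fun r : Fin n → ℝ => r j) ⁻¹' {1}) :=
        (measurable_pi_apply j) (measurableSet_singleton (1:ℝ))
      exact h
  exact hg (Set.toFinite {x | P x}).measurableSet

lemma row_some {n : ℕ} (w : Fin n → ℝ) (h0 : ∀ j, 0 ≤ w j) (h1 : ∀ j, w j ≤ 1)
    (S : Finset (Fin n)) :
    (rowLaw w).real {r | ¬ ∀ j ∈ S, r j = 0} ≤ ∑ j ∈ S, w j := by
  have : ∀ j, IsProbabilityMeasure (bernoulliR (w j)) := fun j => bern_prob (h0 j) (h1 j)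
  have := rowLaw_prob w h0 h1
  have e : {r : Fin n → ℝ | ¬ ∀ j ∈ S, r j = 0} = ⋃ j ∈ S, {r | r j ≠ 0} := by
    ext r; simp
  rw [e]
  refine (measureReal_biUnion_finset_le _ _).trans (Finset.sum_le_sum fun j _ => le_of_eq ?_)
  have : {r : Fin n → ℝ | r j ≠ 0} = Function.eval j ⁻¹' {0}ᶜ := by ext r; simp
  have h2 := (measurePreserving_eval (fun j => bernoulliR (w j)) j).measure_preimage
    (s := {0}ᶜ) (measurableSet_singleton (0:ℝ)).compl.nullMeasurableSet
  rw [this, measureReal_def, rowLaw, h2, bern_ne_zero, ENNReal.toReal_ofReal (h0 j)]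

lemma row_unique {n : ℕ} (w : Fin n → ℝ) (h0 : ∀ j, 0 ≤ w j) (h1 : ∀ j, w j ≤ 1)
    (S : Finset (Fin n)) :
    (∏ j ∈ S, (1 - w j)) * ∑ j ∈ S, w j ≤
    (rowLaw w).real {r | {j : Fin n | j ∈ S ∧ r j = 1}.ncard = 1} := by
  have : ∀ j, IsProbabilityMeasure (bernoulliR (w j)) := fun j => bern_prob (h0 j) (h1 j)
  have := rowLaw_prob w h0 h1
  let B : Fin n → Fin n → Set ℝ := fun j i => if i ∈ S then (if i = j then {1} else {0}) else Set.univ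
  have hB : ∀ j ∈ S, ∀ r ∈ Set.univ.pi (B j), {i : Fin n | i ∈ S ∧ r i = 1} = {j} := by
    intro j hj r hr
    ext i
    have hi := hr i (Set.mem_univ i)
    simp only [B] at hi
    by_cases h : i ∈ S
    · by_cases h' : i = j
      · subst h'; simp [h] at hi ⊢; exact hi
      · simp [h, h'] at hi ⊢; simp [hi]
    · simp only [Set.mem_ofPred_eq, h, false_and, Set.mem_singleton_iff, false_iff]
      rintro rfl; exact h hj
  have hsub : (⋃ j ∈ S, Set.univ.pi (B j)) ⊆
      {r : Fin n → ℝ | {j : Fin n | j ∈ S ∧ r j = 1}.ncard = 1} := by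
    intro r hr
    simp only [Set.mem_iUnion] at hr
    obtain ⟨j, hj, hr⟩ := hr
    simp [hB j hj r hr]
  refine le_trans ?_ (measureReal_mono hsub)
  rw [measureReal_biUnion_finset]
  · rw [Finset.mul_sum]
    refine Finset.sum_le_sum fun j hj => ?_
    have e : (rowLaw w).real (Set.univ.pi (B j)) = ∏ i ∈ S, (if i = j then w i else 1 - w i) := by
      rw [measureReal_def, rowLaw, Measure.pi_pi, ENNReal.toReal_prod,
        ← Finset.prod_subset (Finset.subset_univ S)]
      · refine Finset.prod_congr rfl fun i hi => ?_
        by_cases h : i = j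
        · simp only [B, hi, h, if_true, hj]; rw [bern_one, ENNReal.toReal_ofReal (h0 j)]
        · simp only [B, hi, h, if_true, if_false]
          rw [bern_zero, ENNReal.toReal_ofReal (by linarith [h1 i])]
      · intro i _ hi
        simp [B, hi]
    rw [e, ← Finset.mul_prod_erase S _ hj, ← Finset.mul_prod_erase S _ hj]
    simp only [if_true]
    have e2 : ∏ i ∈ S.erase j, (if i = j then w i else 1 - w i) = ∏ i ∈ S.erase j, (1 - w i) :=
      Finset.prod_congr rfl fun i hi => by simp [Finset.ne_of_mem_erase hi]
    rw [e2]
    have hp : 0 ≤ ∏ i ∈ S.erase j, (1 - w i) :=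
      Finset.prod_nonneg fun i _ => by linarith [h1 i]
    have := mul_nonneg (h0 j) hp
    nlinarith [mul_nonneg (h0 j) this]
  · intro j hj j' hj' hne
    refine Set.disjoint_left.2 fun r hr hr' => hne ?_
    have := (hB j hj r hr).symm.trans (hB j' hj' r hr')
    simpa using this
  · intro j _
    refine MeasurableSet.univ_pi fun i => ?_
    simp only [B]
    split_ifs <;> simp

/-- Column parameters. -/
noncomputable def colW (m : ℕ) (p τ : ℝ) : Fin (m + 1) → ℝ := fun j => if (j : ℕ) < m then p else τ

lemma law_eq (m : ℕ) (p τ : ℝ) :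
    lawLastColumn m p τ = Measure.pi fun _ => rowLaw (colW m p τ) := by
  unfold lawLastColumn rowLaw colW
  congr! 4 with i j
  split_ifs <;> rfl

/-- Row event: row `i` is not a unique neighbour. -/
def rowEv {m : ℕ} (S : Finset (Fin (m + 1))) (i : Fin m) : Set (Fin (m + 1) → ℝ) :=
  {r | ¬ (((∃ j ∈ S, (j : ℕ) = (i : ℕ)) ∧ ∀ j ∈ S, r j = 0) ∨
       ((¬ ∃ j ∈ S, (j : ℕ) = (i : ℕ)) ∧ {j : Fin (m + 1) | j ∈ S ∧ r j = 1}.ncard = 1))}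

lemma rowEv_meas {m : ℕ} (S : Finset (Fin (m + 1))) (i : Fin m) : MeasurableSet (rowEv S i) :=
  row_meas (fun x => ¬ (((∃ j ∈ S, (j : ℕ) = (i : ℕ)) ∧ ∀ j ∈ S, (x j).1) ∨
       ((¬ ∃ j ∈ S, (j : ℕ) = (i : ℕ)) ∧ {j : Fin (m + 1) | j ∈ S ∧ (x j).2}.ncard = 1)))

lemma ev_eq {m : ℕ} (S : Finset (Fin (m + 1))) :
    {M : Fin m → Fin (m + 1) → ℝ | (uniqueNbrSet (Matrix.of M) S).ncard = 0} =
      Set.univ.pi (rowEv S) := by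
  ext M
  simp only [Set.mem_ofPred_eq, Set.ncard_eq_zero (Set.toFinite _), Set.eq_empty_iff_forall_notMem,
    Set.mem_univ_pi]
  rfl

lemma exists_val_iff {m : ℕ} (S : Finset (Fin (m + 1))) (i : Fin m) :
    (∃ j ∈ S, (j : ℕ) = (i : ℕ)) ↔ i.castSucc ∈ S := by
  constructor
  · rintro ⟨j, hj, h⟩
    have : j = i.castSucc := Fin.ext h
    rwa [← this]
  · intro h; exact ⟨_, h, rfl⟩

lemma sum_colW {m k : ℕ} (p τ : ℝ) (S : Finset (Fin (m + 1))) (hc : S.card = k + 1)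
    (hl : Fin.last m ∈ S) : ∑ j ∈ S, colW m p τ j = k * p + τ := by
  rw [← Finset.sum_erase_add S _ hl]
  have : ∑ j ∈ S.erase (Fin.last m), colW m p τ j = ∑ j ∈ S.erase (Fin.last m), p := by
    refine Finset.sum_congr rfl fun j hj => ?_
    have := Finset.ne_of_mem_erase hj
    have h2 : (j : ℕ) < m := by
      have := Fin.lt_last_iff_ne_last.2 this
      exact this
    simp [colW, h2]
  rw [this, Finset.sum_const, Finset.card_erase_of_mem hl, hc]
  simp [colW]

lemma prod_colW {m k : ℕ} (p τ : ℝ) (S : Finset (Fin (m + 1))) (hc : S.card = k + 1)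
    (hl : Fin.last m ∈ S) : ∏ j ∈ S, (1 - colW m p τ j) = (1 - p) ^ k * (1 - τ) := by
  rw [← Finset.prod_erase_mul S _ hl]
  have : ∏ j ∈ S.erase (Fin.last m), (1 - colW m p τ j) =
      ∏ j ∈ S.erase (Fin.last m), (1 - p) := by
    refine Finset.prod_congr rfl fun j hj => ?_
    have := Finset.ne_of_mem_erase hj
    have h2 : (j : ℕ) < m := by
      have := Fin.lt_last_iff_ne_last.2 this
      exact this
    simp [colW, h2]
  rw [this, Finset.prod_const, Finset.card_erase_of_mem hl, hc]
  simp [colW]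

lemma card_in {m k : ℕ} (S : Finset (Fin (m + 1))) (hc : S.card = k + 1)
    (hl : Fin.last m ∈ S) :
    (Finset.univ.filter fun i : Fin m => i.castSucc ∈ S).card = k := by
  have h : (S.erase (Fin.last m)).card = k := by rw [Finset.card_erase_of_mem hl, hc]; rfl
  rw [← h, ← Finset.card_map (Fin.castSuccEmb)]
  congr 1
  ext j
  simp only [Finset.mem_map, Finset.mem_filter, Finset.mem_univ, true_and, Finset.mem_erase]
  constructor
  · rintro ⟨i, hi, rfl⟩
    exact ⟨Fin.castSucc_ne_last i, hi⟩
  · rintro ⟨h1, h2⟩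
    obtain ⟨i, rfl⟩ := Fin.exists_castSucc_eq.2 h1
    exact ⟨i, h2, rfl⟩

lemma ev_bound {m k : ℕ} {p τ : ℝ} (hp0 : 0 ≤ p) (hp1 : p ≤ 1) (ht0 : 0 ≤ τ) (ht1 : τ ≤ 1)
    (S : Finset (Fin (m + 1))) (hc : S.card = k + 1) (hl : Fin.last m ∈ S) :
    (lawLastColumn m p τ).real
      {M : Fin m → Fin (m + 1) → ℝ | (uniqueNbrSet (Matrix.of M) S).ncard = 0} ≤
      (k * p + τ) ^ k * (1 - (1 - p) ^ k * (1 - τ) * (k * p + τ)) ^ (m - k) := by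
  have h0 : ∀ j, 0 ≤ colW m p τ j := fun j => by unfold colW; split_ifs <;> assumption
  have h1 : ∀ j, colW m p τ j ≤ 1 := fun j => by unfold colW; split_ifs <;> assumption
  have := rowLaw_prob _ h0 h1
  rw [ev_eq, law_eq, measureReal_def, Measure.pi_pi, ENNReal.toReal_prod]
  have key : ∀ i : Fin m, (rowLaw (colW m p τ) (rowEv S i)).toReal ≤
      if i.castSucc ∈ S then k * p + τ else 1 - (1 - p) ^ k * (1 - τ) * (k * p + τ) := by
    intro i
    rw [← measureReal_def]
    split_ifs with h
    · have e : rowEv S i = {r | ¬ ∀ j ∈ S, r j = 0} := by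
        unfold rowEv; simp only [exists_val_iff, h]; simp
      rw [e, ← sum_colW p τ S hc hl]
      exact row_some _ h0 h1 S
    · have e : rowEv S i = {r | {j : Fin (m + 1) | j ∈ S ∧ r j = 1}.ncard = 1}ᶜ := by
        unfold rowEv; simp only [exists_val_iff, h]; ext r; simp
      have hm : MeasurableSet {r : Fin (m+1) → ℝ | {j : Fin (m + 1) | j ∈ S ∧ r j = 1}.ncard = 1} :=
        row_meas (fun x => {j : Fin (m + 1) | j ∈ S ∧ (x j).2}.ncard = 1)
      rw [e, probReal_compl_eq_one_sub hm, ← sum_colW p τ S hc hl, ← prod_colW p τ S hc hl]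
      linarith [row_unique _ h0 h1 S]
  refine (Finset.prod_le_prod (fun i _ => ENNReal.toReal_nonneg) fun i _ => key i).trans ?_
  rw [Finset.prod_ite, Finset.prod_const, Finset.prod_const, card_in S hc hl]
  have h3 : (Finset.univ.filter fun i : Fin m => ¬ i.castSucc ∈ S).card = m - k := by
    have := Finset.card_filter_add_card_filter_not (s := (Finset.univ : Finset (Fin m)))
      (fun i : Fin m => i.castSucc ∈ S)
    rw [card_in S hc hl] at this
    simp at this
    omega
  rw [h3]

lemma int_bound {m k : ℕ} {p τ : ℝ} (hp0 : 0 ≤ p) (hp1 : p ≤ 1) (ht0 : 0 ≤ τ) (ht1 : τ ≤ 1) :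
    (∫ M, (({S : Finset (Fin (m + 1)) | S.card = k + 1 ∧
                (⟨m, Nat.lt_succ_self m⟩ : Fin (m + 1)) ∈ S ∧
                (uniqueNbrSet (Matrix.of M) S).ncard = 0}).ncard : ℝ)
            ∂(lawLastColumn m p τ)) ≤ (m.choose k : ℝ) *
      ((k * p + τ) ^ k * (1 - (1 - p) ^ k * (1 - τ) * (k * p + τ)) ^ (m - k)) := by
  classical
  have h0 : ∀ j, 0 ≤ colW m p τ j := fun j => by unfold colW; split_ifs <;> assumption
  have h1 : ∀ j, colW m p τ j ≤ 1 := fun j => by unfold colW; split_ifs <;> assumption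
  have := rowLaw_prob _ h0 h1
  have : IsProbabilityMeasure (lawLastColumn m p τ) := by rw [law_eq]; infer_instance
  let F : Finset (Finset (Fin (m + 1))) :=
    Finset.univ.filter fun S => S.card = k + 1 ∧ Fin.last m ∈ S
  let A : Finset (Fin (m + 1)) → Set (Fin m → Fin (m + 1) → ℝ) := fun S =>
    {M | (uniqueNbrSet (Matrix.of M) S).ncard = 0}
  have hA : ∀ S, MeasurableSet (A S) := fun S => by
    simp only [A]; rw [ev_eq]; exact MeasurableSet.univ_pi fun i => rowEv_meas S i
  have e : ∀ M : Fin m → Fin (m + 1) → ℝ, (({S : Finset (Fin (m + 1)) | S.card = k + 1 ∧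
                (⟨m, Nat.lt_succ_self m⟩ : Fin (m + 1)) ∈ S ∧
                (uniqueNbrSet (Matrix.of M) S).ncard = 0}).ncard : ℝ) =
      ∑ S ∈ F, (A S).indicator (fun _ => (1:ℝ)) M := by
    intro M
    have : {S : Finset (Fin (m + 1)) | S.card = k + 1 ∧
                (⟨m, Nat.lt_succ_self m⟩ : Fin (m + 1)) ∈ S ∧
                (uniqueNbrSet (Matrix.of M) S).ncard = 0} =
        ((F.filter fun S => M ∈ A S : Finset (Finset (Fin (m + 1)))) : Set _) := by
      ext S
      simp only [F, A, Finset.coe_filter, Finset.mem_filter, Finset.mem_univ, true_and,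
        Set.mem_ofPred_eq, and_assoc]
      rfl
    rw [this, Set.ncard_coe_finset, Finset.card_filter]
    push_cast
    refine Finset.sum_congr rfl fun S _ => ?_
    simp [Set.indicator_apply]
  simp only [e]
  rw [integral_finsetSum]
  · have hF : F.card ≤ m.choose k := by
      have : (Finset.powersetCard k (Finset.univ.erase (Fin.last m))).card = m.choose k := by
        rw [Finset.card_powersetCard, Finset.card_erase_of_mem (Finset.mem_univ _)]; simp
      rw [← this]
      refine Finset.card_le_card_of_injOn (fun S => S.erase (Fin.last m)) ?_ ?_
      · intro S hS
        simp only [F, Finset.coe_filter, Finset.mem_univ, true_and, Set.mem_ofPred_eq] at hS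
        simp only [Finset.mem_coe, Finset.mem_powersetCard,
          Set.mem_ofPred_eq]
        exact ⟨Finset.erase_subset_erase _ (Finset.subset_univ _), by
          rw [Finset.card_erase_of_mem hS.2, hS.1]; rfl⟩
      · intro S hS S' hS' h
        simp only [F, Finset.coe_filter, Finset.mem_univ, true_and, Set.mem_ofPred_eq] at hS hS'
        simp only at h
        rw [← Finset.insert_erase hS.2, ← Finset.insert_erase hS'.2, h]
    set b := (k * p + τ) ^ k * (1 - (1 - p) ^ k * (1 - τ) * (k * p + τ)) ^ (m - k) with hb
    have hS : ∀ S ∈ F, ∫ M, (A S).indicator (fun _ => (1:ℝ)) M ∂(lawLastColumn m p τ) ≤ b := by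
      intro S hS
      simp only [F, Finset.mem_filter, Finset.mem_univ, true_and] at hS
      rw [integral_indicator_const _ (hA S)]
      simp only [smul_eq_mul, mul_one]
      exact ev_bound hp0 hp1 ht0 ht1 S hS.1 hS.2
    by_cases hne : F.Nonempty
    · obtain ⟨S, hSF⟩ := hne
      have hb0 : 0 ≤ b := le_trans (integral_nonneg fun M =>
        Set.indicator_nonneg (fun _ _ => zero_le_one) M) (hS S hSF)
      refine (Finset.sum_le_card_nsmul _ _ _ hS).trans ?_
      rw [nsmul_eq_mul]
      exact mul_le_mul_of_nonneg_right (by exact_mod_cast hF) hb0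
    · rw [Finset.not_nonempty_iff_eq_empty] at hne
      by_cases hk : k ≤ m
      · exfalso
        obtain ⟨T, hT, hTc⟩ := Finset.exists_subset_card_eq
          (s := Finset.univ.erase (Fin.last m)) (n := k) (by
            rw [Finset.card_erase_of_mem (Finset.mem_univ _)]; simpa using hk)
        have hn : Fin.last m ∉ T := fun h => by simpa using hT h
        have : insert (Fin.last m) T ∈ F := by
          simp only [F, Finset.mem_filter, Finset.mem_univ, true_and]
          exact ⟨by rw [Finset.card_insert_of_notMem hn, hTc], Finset.mem_insert_self _ _⟩
        rw [hne] at this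
        simp at this
      · rw [hne, Nat.choose_eq_zero_of_lt (by omega)]; simp
  · intro S _
    exact (integrable_const (1:ℝ)).indicator (hA S)

lemma small_case (δ : ℝ) (hδ : 0 < δ) (m : ℕ) :
    ∃ C : ℝ, 0 ≤ C ∧ ∀ (p τ : ℝ),
        p * m ∈ Set.Icc (1 + δ) δ⁻¹ →
        τ * m ∈ Set.Icc (Real.sqrt (Real.log m) / 2) (2 * Real.sqrt (Real.log m)) →
        ∀ k : ℕ,
          (∫ M, (({S : Finset (Fin (m + 1)) | S.card = k + 1 ∧
                (⟨m, Nat.lt_succ_self m⟩ : Fin (m + 1)) ∈ S ∧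
                (uniqueNbrSet (Matrix.of M) S).ncard = 0}).ncard : ℝ)
            ∂(lawLastColumn m p τ)) ≤ C := by
  set B : ℝ := 1 + δ⁻¹ + 2 * Real.sqrt (Real.log m) with hB
  have hi : 0 < δ⁻¹ := inv_pos.2 hδ
  have hs : 0 ≤ Real.sqrt (Real.log m) := Real.sqrt_nonneg _
  refine ⟨2 ^ (m + 1) * (B ^ (m + 1)) ^ m, by positivity, ?_⟩
  intro p τ hp ht k
  have hm : 1 ≤ m := by
    rcases Nat.eq_zero_or_pos m with h | h
    · subst h; simp at hp; linarith [hp.1]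
    · exact h
  have hm' : (1:ℝ) ≤ m := by exact_mod_cast hm
  have hp0 : 0 ≤ p := by
    by_contra h
    push Not at h
    nlinarith [hp.1]
  have ht0 : 0 ≤ τ := by
    by_contra h
    push Not at h
    nlinarith [ht.1]
  have hpB : p ≤ δ⁻¹ := by nlinarith [hp.2]
  have htB : τ ≤ 2 * Real.sqrt (Real.log m) := by nlinarith [ht.2]
  have h0 : ∀ j, 0 ≤ colW m p τ j := fun j => by unfold colW; split_ifs <;> assumption
  have h1 : ∀ j, 1 + colW m p τ j ≤ B := fun j => by unfold colW; split_ifs <;> linarith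
  have : ∀ j, IsFiniteMeasure (bernoulliR (colW m p τ j)) := fun j => bern_finite _
  have : IsFiniteMeasure (rowLaw (colW m p τ)) := by unfold rowLaw; infer_instance
  have : IsFiniteMeasure (lawLastColumn m p τ) := by rw [law_eq]; infer_instance
  have hrow : (rowLaw (colW m p τ) Set.univ).toReal ≤ B ^ (m + 1) := by
    rw [rowLaw, Measure.pi_univ, ENNReal.toReal_prod]
    have : ∀ j ∈ (Finset.univ : Finset (Fin (m + 1))),
        (bernoulliR (colW m p τ j) Set.univ).toReal ≤ B := by
      intro j _
      rw [bern_univ, ENNReal.toReal_add ENNReal.ofReal_ne_top ENNReal.ofReal_ne_top,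
        ENNReal.toReal_ofReal (h0 j), ENNReal.toReal_ofReal']
      have : max (1 - colW m p τ j) 0 ≤ 1 := max_le (by linarith [h0 j]) zero_le_one
      linarith [h1 j]
    refine (Finset.prod_le_prod (fun j _ => ENNReal.toReal_nonneg) this).trans ?_
    simp
  have hu : (lawLastColumn m p τ).real Set.univ ≤ (B ^ (m + 1)) ^ m := by
    rw [law_eq, measureReal_def, Measure.pi_univ, ENNReal.toReal_prod, Finset.prod_const]
    simp only [Finset.card_univ, Fintype.card_fin]
    exact pow_le_pow_left₀ ENNReal.toReal_nonneg hrow _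
  have hn := norm_integral_le_of_norm_le_const (μ := lawLastColumn m p τ) (C := 2 ^ (m + 1))
    (f := fun M => (({S : Finset (Fin (m + 1)) | S.card = k + 1 ∧
                (⟨m, Nat.lt_succ_self m⟩ : Fin (m + 1)) ∈ S ∧
                (uniqueNbrSet (Matrix.of M) S).ncard = 0}).ncard : ℝ))
    (Filter.Eventually.of_forall fun M => by
      rw [Real.norm_of_nonneg (Nat.cast_nonneg _)]
      have := Set.ncard_le_card {S : Finset (Fin (m + 1)) | S.card = k + 1 ∧
                (⟨m, Nat.lt_succ_self m⟩ : Fin (m + 1)) ∈ S ∧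
                (uniqueNbrSet (Matrix.of M) S).ncard = 0}
      rw [Nat.card_eq_fintype_card, Fintype.card_finset, Fintype.card_fin] at this
      exact_mod_cast this)
  refine (Real.le_norm_self _).trans (hn.trans ?_)
  exact mul_le_mul_of_nonneg_left hu (by positivity)

lemma event_cond (δ : ℝ) : ∃ N : ℕ, ∀ m : ℕ, N ≤ m → 1 ≤ m ∧ 
    32 * (Real.log m) ^ ((1 : ℝ) / 3) ≤ Real.sqrt (Real.log m) ∧
    (Real.log m) ^ ((1 : ℝ) / 3) * δ⁻¹ ≤ m / 6 ∧ 2 * Real.sqrt (Real.log m) ≤ m / 6 ∧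
    δ⁻¹ ≤ m := by
  have hL : Filter.Tendsto (fun m : ℕ => Real.log m) Filter.atTop Filter.atTop :=
    Real.tendsto_log_atTop.comp tendsto_natCast_atTop_atTop
  have hlo : ∀ c : ℝ, 0 < c → ∀ᶠ m : ℕ in Filter.atTop, Real.log m ≤ c * m := by
    intro c hc
    have := (Real.isLittleO_log_id_atTop.comp_tendsto
      (tendsto_natCast_atTop_atTop (R := ℝ))).bound hc
    filter_upwards [this] with m hm
    simp only [Function.comp, id, Real.norm_eq_abs, Nat.abs_cast] at hm
    exact (le_abs_self _).trans hm
  have h32 : ∀ᶠ m : ℕ in Filter.atTop, (32:ℝ) ^ (6:ℝ) ≤ Real.log m :=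
    hL.eventually_ge_atTop _
  have := (((((Filter.eventually_ge_atTop 1).and h32).and (hlo (1 / 12) (by norm_num))).and
    (hlo (1 / (6 * (|δ⁻¹| + 1))) (by positivity))).and
    ((tendsto_natCast_atTop_atTop (R := ℝ)).eventually_ge_atTop δ⁻¹))
  obtain ⟨N, hN⟩ := Filter.eventually_atTop.1 this
  refine ⟨N, fun m hm => ?_⟩
  obtain ⟨⟨⟨⟨a1, a2⟩, a3⟩, a4⟩, a5⟩ := hN m hm
  have hL1 : 1 ≤ Real.log m := le_trans (by norm_num) a2
  have hthird : (Real.log m) ^ ((1 : ℝ) / 3) ≤ Real.log m := by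
    conv_rhs => rw [← Real.rpow_one (Real.log m)]
    exact Real.rpow_le_rpow_of_exponent_le hL1 (by norm_num)
  have hhalf : Real.sqrt (Real.log m) ≤ Real.log m := by
    rw [Real.sqrt_le_left (by linarith)]; nlinarith
  refine ⟨a1, ?_, ?_, by linarith, a5⟩
  · have h6 : (32:ℝ) ≤ (Real.log m) ^ ((1 : ℝ) / 6) := by
      have := Real.rpow_le_rpow (by positivity) a2 (show (0:ℝ) ≤ 1 / 6 by norm_num)
      rw [← Real.rpow_mul (by norm_num)] at this
      norm_num at this ⊢
      exact this
    rw [Real.sqrt_eq_rpow, show (1:ℝ) / 2 = 1 / 6 + 1 / 3 by norm_num,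
      Real.rpow_add (by linarith)]
    exact mul_le_mul_of_nonneg_right h6 (by positivity)
  · have h7 : Real.log m * (|δ⁻¹| + 1) ≤ m / 6 := by
      have := mul_le_mul_of_nonneg_right a4 (show 0 ≤ |δ⁻¹| + 1 by positivity)
      refine this.trans (le_of_eq ?_)
      field_simp
    have h8 : 0 ≤ (Real.log m) ^ ((1 : ℝ) / 3) := by positivity
    calc _ ≤ (Real.log m) ^ ((1 : ℝ) / 3) * (|δ⁻¹| + 1) :=
          mul_le_mul_of_nonneg_left (by linarith [le_abs_self δ⁻¹]) h8
      _ ≤ Real.log m * (|δ⁻¹| + 1) := mul_le_mul_of_nonneg_right hthird (by positivity)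
      _ ≤ _ := h7

lemma analytic {m k : ℕ} {p τ s : ℝ} (hm : 1 ≤ m) (hp0 : 0 ≤ p) (hp1 : p ≤ 1)
    (hpm : 1 ≤ p * m) (ht0 : 0 ≤ τ) (ht6 : τ ≤ 1 / 6) (hkp : k * p ≤ 1 / 6)
    (hts : s / 2 ≤ τ * m) (hks : 32 * (k : ℝ) ≤ s) :
    (m.choose k : ℝ) *
      ((k * p + τ) ^ k * (1 - (1 - p) ^ k * (1 - τ) * (k * p + τ)) ^ (m - k)) ≤
      Real.exp (-(s / 16)) := by
  have hm0 : (0:ℝ) < m := by exact_mod_cast hm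
  have hk0 : (0:ℝ) ≤ k := Nat.cast_nonneg k
  set y : ℝ := k * p + τ with hy
  have hy0 : 0 ≤ y := by positivity
  have hy1 : y ≤ 1 := by linarith
  set q : ℝ := (1 - p) ^ k * (1 - τ) * y with hq
  have hkm : (k:ℝ) ≤ m / 6 := by nlinarith
  have hkm' : k ≤ m := by
    have : (k:ℝ) ≤ m := by linarith
    exact_mod_cast this
  have hpk : 5 / 6 ≤ (1 - p) ^ k := by
    have := one_add_mul_le_pow (show (-2:ℝ) ≤ -p by linarith) k
    rw [← sub_eq_add_neg] at this
    linarith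
  have hpk1 : (1 - p) ^ k ≤ 1 := pow_le_one₀ (by linarith) (by linarith)
  have hc : 25 / 36 ≤ (1 - p) ^ k * (1 - τ) := by nlinarith
  have hc1 : (1 - p) ^ k * (1 - τ) ≤ 1 := by nlinarith
  have hq1 : q ≤ 1 := by nlinarith
  have hq0 : 25 / 36 * y ≤ q := mul_le_mul_of_nonneg_right hc hy0
  have hqm : m * y / 2 ≤ q * (m - k) := by
    have h1 : 5 / 6 * (m:ℝ) ≤ m - k := by linarith
    have := mul_le_mul hq0 h1 (by positivity) (by nlinarith)
    have h2 : 0 ≤ m * y := by positivity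
    nlinarith
  have hE : (1 - q) ^ (m - k) ≤ Real.exp (-(m * y / 2)) := by
    have h1 : 1 - q ≤ Real.exp (-q) := Real.one_sub_le_exp_neg q
    calc (1 - q) ^ (m - k) ≤ (Real.exp (-q)) ^ (m - k) := pow_le_pow_left₀ (by linarith) h1 _
      _ = Real.exp (-(q * (m - k))) := by
        rw [← Real.exp_nat_mul, Nat.cast_sub hkm']; congr 1; ring
      _ ≤ _ := Real.exp_le_exp.2 (by linarith)
  have hch : (m.choose k : ℝ) ≤ (m:ℝ) ^ k / (k.factorial : ℝ) := Nat.choose_le_pow_div k m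
  have hA : (m.choose k : ℝ) * y ^ k ≤ 4 ^ k * Real.exp (m * y / 4) := by
    have h1 := Real.pow_div_factorial_le_exp (m * y / 4) (by positivity) k
    calc (m.choose k : ℝ) * y ^ k ≤ (m:ℝ) ^ k / (k.factorial : ℝ) * y ^ k :=
          mul_le_mul_of_nonneg_right hch (by positivity)
      _ = 4 ^ k * ((m * y / 4) ^ k / (k.factorial : ℝ)) := by
          rw [div_pow, mul_pow]; field_simp
      _ ≤ _ := mul_le_mul_of_nonneg_left h1 (by positivity)
  have h4 : (4:ℝ) ^ k ≤ Real.exp (2 * k) := by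
    have : (4:ℝ) ≤ Real.exp 2 := by
      have h := Real.add_one_le_exp (1:ℝ)
      have e : Real.exp 2 = Real.exp 1 * Real.exp 1 := by rw [← Real.exp_add]; norm_num
      rw [e]; nlinarith
    calc (4:ℝ) ^ k ≤ (Real.exp 2) ^ k := pow_le_pow_left₀ (by norm_num) this k
      _ = _ := by rw [← Real.exp_nat_mul]; congr 1; ring
  have hx : s / 2 ≤ m * y := by
    have : 0 ≤ k * p * m := by positivity
    rw [hy]; nlinarith
  calc (m.choose k : ℝ) * (y ^ k * (1 - q) ^ (m - k))
      = ((m.choose k : ℝ) * y ^ k) * (1 - q) ^ (m - k) := by ring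
    _ ≤ (4 ^ k * Real.exp (m * y / 4)) * Real.exp (-(m * y / 2)) :=
        mul_le_mul hA hE (pow_nonneg (by linarith) _) (by positivity)
    _ ≤ (Real.exp (2 * k) * Real.exp (m * y / 4)) * Real.exp (-(m * y / 2)) := by gcongr
    _ = Real.exp (2 * k + m * y / 4 + -(m * y / 2)) := by rw [Real.exp_add, Real.exp_add]
    _ ≤ _ := Real.exp_le_exp.2 (by linarith)

theorem unique_neighbour_exceptional_column (δ : ℝ) (hδ : 0 < δ) :
    ∃ C : ℝ, 0 < C ∧
      ∀ (m : ℕ) (p τ : ℝ),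
        p * m ∈ Set.Icc (1 + δ) δ⁻¹ →
        τ * m ∈ Set.Icc (Real.sqrt (Real.log m) / 2) (2 * Real.sqrt (Real.log m)) →
        ∀ k : ℕ, (k : ℝ) ≤ (Real.log m) ^ ((1 : ℝ) / 3) →
          (∫ M, (({S : Finset (Fin (m + 1)) | S.card = k + 1 ∧
                (⟨m, Nat.lt_succ_self m⟩ : Fin (m + 1)) ∈ S ∧
                (uniqueNbrSet (Matrix.of M) S).ncard = 0}).ncard : ℝ)
            ∂(lawLastColumn m p τ)) ≤ C * Real.exp (-(Real.sqrt (Real.log m) / 16)) := by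
  obtain ⟨N, hN⟩ := event_cond δ
  choose D hD0 hD using small_case δ hδ
  have hsum0 : 0 ≤ ∑ m ∈ Finset.range N, D m * Real.exp (Real.sqrt (Real.log m) / 16) :=
    Finset.sum_nonneg fun m _ => mul_nonneg (hD0 m) (Real.exp_pos _).le
  refine ⟨1 + ∑ m ∈ Finset.range N, D m * Real.exp (Real.sqrt (Real.log m) / 16),
    by linarith, ?_⟩
  intro m p τ hp ht k hk
  by_cases hmN : N ≤ m
  · obtain ⟨a1, a2, a3, a4, a5⟩ := hN m hmN
    have hm' : (1:ℝ) ≤ m := by exact_mod_cast a1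
    have hs : 0 ≤ Real.sqrt (Real.log m) := Real.sqrt_nonneg _
    have hi : 0 < δ⁻¹ := inv_pos.2 hδ
    have hp0 : 0 ≤ p := by
      by_contra h
      push Not at h
      nlinarith [hp.1]
    have ht0 : 0 ≤ τ := by
      by_contra h
      push Not at h
      nlinarith [ht.1]
    have hp1 : p ≤ 1 := by
      by_contra h
      push Not at h
      nlinarith [hp.2]
    have ht6 : τ ≤ 1 / 6 := by
      by_contra h
      push Not at h
      nlinarith [ht.2]
    have hkp : k * p ≤ 1 / 6 := by
      have h1 : k * (p * m) ≤ m / 6 :=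
        (mul_le_mul hk hp.2 (by positivity) (by positivity)).trans a3
      by_contra h
      push Not at h
      nlinarith
    refine (int_bound hp0 hp1 ht0 (by linarith)).trans ?_
    refine (analytic a1 hp0 hp1 (by linarith [hp.1]) ht0 ht6 hkp ht.1 (by linarith)).trans ?_
    have := Real.exp_pos (-(Real.sqrt (Real.log m) / 16))
    nlinarith
  · refine (hD m p τ hp ht k).trans ?_
    have h1 : D m * Real.exp (Real.sqrt (Real.log m) / 16) ≤
        ∑ m ∈ Finset.range N, D m * Real.exp (Real.sqrt (Real.log m) / 16) :=
      Finset.single_le_sum (f := fun m : ℕ => D m * Real.exp (Real.sqrt (Real.log m) / 16))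
        (fun m _ => mul_nonneg (hD0 m) (Real.exp_pos _).le)
        (Finset.mem_range.2 (not_le.1 hmN))
    have h2 := mul_le_mul_of_nonneg_right h1
      (Real.exp_pos (-(Real.sqrt (Real.log m) / 16))).le
    rw [mul_assoc, ← Real.exp_add, add_neg_cancel, Real.exp_zero, mul_one] at h2
    have := Real.exp_pos (-(Real.sqrt (Real.log m) / 16))
    linarith
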